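/- Let V be a finite-dimensional complex inner product space, let Π_A and Π_B be orthogonal projections on V, and let U = (2Π_A − I)(2Π_B − I). Let φ be a unit vector with Uφ = φ, let ϕ ∈ V satisfy Π_B ϕ = ϕ, let p ∈ (0, 1], and suppose ψ = √p·φ + (I − Π_A)ϕ is a unit vector. Let p̄ ∈ (0, p] be a known lower bound on p and let D > 0 satisfy D ≥ ‖ϕ‖/√p. Let ε ∈ (0, 1) with ε/D < π, set λ = ε/D, and let L be an odd positive integer with L ≥ (2D/ε)·ln(2√2/(√p̄·ε)). Apply the circuit C(U, λ, L) to e_0 ⊗ ψ, and let p' = ‖(⟨e_0| ⊗ I)·C(U,λ,L)·(e_0 ⊗ ψ)‖² be the probability of measuring the ancillary qubit in state |0⟩, with post-measurement state ψ' = (⟨e_0| ⊗ I)·C(U,λ,L)·(e_0 ⊗ ψ)/√p'. Then p ≤ p' ≤ p·(1 + (3/4)ε²) and ‖ψ' − φ‖ ≤ ε. -/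

import Mathlib

/-!
Eigenstate filtering by quantum phase discrimination.

Over an eigenvector of `U` with eigenvalue `μ = exp (iα)` the circuit acts on the ancilla by a
`2 × 2` matrix, and everything rests on its amplitude `⟨0|C|0⟩`. The antisymmetry
`θ_{L-n} = -θ_n` makes the inner product `P = ∏ diag(1, μ) Ry(θ_n)` a symmetric matrix, and the
amplitude is then `tr P / 2` (`qpdAmp_eq_trace`). With `ω = exp (2πi/L)`, each `Ry(θ_n)` is a scalar
multiple of `A + ω ^ n B` for fixed matrices `A`, `B` (`Ry_qpdTheta`). The trace of
`∏ (E A + x ω ^ n E B)`, `E = diag(1, μ)`, is a polynomial of degree at most `L` in `x`, and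
cyclicity of the trace makes it invariant under `x ↦ ω x`. Hence only the coefficients of `x ^ 0`
and `x ^ L` survive (`trace_revProd`), that is, multiples of `tr (E A) ^ L` and `tr (E B) ^ L`, and
by Cayley–Hamilton these are Chebyshev polynomials (`trace_pow_chebyshev`). As the amplitude is `1`
at `α = 0`, its modulus is `|T_L(cos (α/2) / cos (λ/2))| / T_L(1 / cos (λ/2))` (`norm_qpdAmp`).
It is at most `1`, and it is at most `2 exp (-λL/2)` once `|α| ≥ λ`, because
`T_L(1 / cos (λ/2)) ≥ T_L(cosh (λ/2)) = cosh (λL/2)`.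

Since `Π_B ϕ = ϕ`, the unwanted component is `(1 - Π_A)ϕ = (1 - U)ϕ / 2`. It is orthogonal to the
fixed vectors of `U`, and its component at phase `α` is at most `|α|/2` times that of `ϕ`. Expanding
`ϕ` in eigenvectors of `U`, the filtered unwanted component `w` satisfies
`‖w‖² ≤ (λ/2)²‖ϕ‖² + 4 exp (-λL) ≤ (ε²/4 + ε²/2) p`, and `p' = p + ‖w‖²` by Pythagoras.
-/

open Real

section Circuit

variable {V : Type*} [AddCommGroup V] [Module ℂ V]

/-- The operator `A ⊗ I` on `ℂ² ⊗ V ≅ V × V`, for a 2×2 complex matrix `A`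
(the first component is the `|0⟩` part of the ancilla). -/
noncomputable def opTensor (A : Matrix (Fin 2) (Fin 2) ℂ) : Module.End ℂ (V × V) :=
  LinearMap.prod (A 0 0 • LinearMap.fst ℂ V V + A 0 1 • LinearMap.snd ℂ V V)
    (A 1 0 • LinearMap.fst ℂ V V + A 1 1 • LinearMap.snd ℂ V V)

/-- The controlled-`U` operator `Λ(U)` on `ℂ² ⊗ V ≅ V × V`: it acts as the
identity on the `|0⟩` component and as `U` on the `|1⟩` component. -/
noncomputable def ctrlOp (U : Module.End ℂ V) : Module.End ℂ (V × V) :=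
  LinearMap.prod (LinearMap.fst ℂ V V) (U ∘ₗ LinearMap.snd ℂ V V)

/-- The single-qubit rotation `R_x(θ)`. -/
noncomputable def Rx (θ : ℝ) : Matrix (Fin 2) (Fin 2) ℂ :=
  !![(Real.cos (θ / 2) : ℂ), -Complex.I * Real.sin (θ / 2);
     -Complex.I * Real.sin (θ / 2), (Real.cos (θ / 2) : ℂ)]

/-- The single-qubit rotation `R_y(θ)`. -/
noncomputable def Ry (θ : ℝ) : Matrix (Fin 2) (Fin 2) ℂ :=
  !![(Real.cos (θ / 2) : ℂ), -(Real.sin (θ / 2) : ℂ);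
     (Real.sin (θ / 2) : ℂ), (Real.cos (θ / 2) : ℂ)]

/-- The QPD rotation angles `θ_n = 2·arctan(sin(λ/2)·tan(nπ/L))`. -/
noncomputable def qpdTheta (lam : ℝ) (L n : ℕ) : ℝ :=
  2 * Real.arctan (Real.sin (lam / 2) * Real.tan (n * π / L))

/-- The quantum phase discrimination circuit
`C(U,λ,L) = (R_x(−π/2)⊗I)·[∏_{n=0}^{L−1} Λ(U)·(R_y(θ_n)⊗I)]·(R_x(π/2)⊗I)`
on `ℂ² ⊗ V ≅ V × V`, with the `n = 0` factor applied first (rightmost). -/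
noncomputable def qpdCircuit (U : Module.End ℂ V) (lam : ℝ) (L : ℕ) :
    Module.End ℂ (V × V) :=
  opTensor (Rx (-(π / 2))) *
    (((List.range L).map fun n => ctrlOp U * opTensor (Ry (qpdTheta lam L n))).reverse).prod *
    opTensor (Rx (π / 2))

end Circuit

/-! ### Chebyshev polynomials outside `[-1, 1]` -/

/-- The derivative of `cos * cosh` is minus `sin * cosh - cos * sinh`, which is nonnegative because
its own derivative is `2 * sin * sinh`. -/
theorem cos_mul_cosh_le_one {x : ℝ} (h0 : 0 ≤ x) (h1 : x ≤ π) : cos x * cosh x ≤ 1 := by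
  have hk : MonotoneOn (fun y : ℝ => sin y * cosh y - cos y * sinh y) (Set.Icc 0 π) := by
    refine monotoneOn_of_deriv_nonneg (convex_Icc _ _) (by fun_prop) (by fun_prop) ?_
    intro y hy
    rw [interior_Icc] at hy
    have hd : HasDerivAt (fun y : ℝ => sin y * cosh y - cos y * sinh y)
        (2 * (sin y * sinh y)) y := by
      refine (((hasDerivAt_sin y).mul (hasDerivAt_cosh y)).sub
        ((hasDerivAt_cos y).mul (hasDerivAt_sinh y))).congr_deriv ?_
      ring
    rw [hd.deriv]
    have := sin_nonneg_of_nonneg_of_le_pi hy.1.le hy.2.le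
    have := sinh_nonneg_iff.2 hy.1.le
    positivity
  have hg : AntitoneOn (fun y : ℝ => cos y * cosh y) (Set.Icc 0 π) := by
    refine antitoneOn_of_deriv_nonpos (convex_Icc _ _) (by fun_prop) (by fun_prop) ?_
    intro y hy
    rw [interior_Icc] at hy
    have hd := (hasDerivAt_cos y).mul (hasDerivAt_cosh y)
    have h := hk (Set.left_mem_Icc.2 pi_pos.le) (Set.Ioo_subset_Icc_self hy) hy.1.le
    have e : deriv (fun y : ℝ => cos y * cosh y) y = -sin y * cosh y + cos y * sinh y := hd.deriv
    rw [e]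
    simp at h
    linarith
  simpa using hg (Set.left_mem_Icc.2 pi_pos.le) ⟨h0, h1⟩ h0

open Polynomial in
theorem chebyshev_T_mono (n : ℕ) {x y : ℝ} (hx : 1 ≤ x) (hxy : x ≤ y) :
    (Chebyshev.T ℝ n).eval x ≤ (Chebyshev.T ℝ n).eval y := by
  rw [← cosh_arcosh hx, ← cosh_arcosh (hx.trans hxy), Chebyshev.T_real_cosh,
    Chebyshev.T_real_cosh, cosh_le_cosh]
  have h1 := arcosh_nonneg hx
  have h2 := arcosh_nonneg (hx.trans hxy)
  have h3 : arcosh x ≤ arcosh y := (arcosh_le_arcosh (by linarith) (by linarith)).2 hxy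
  rw [abs_of_nonneg (by positivity), abs_of_nonneg (by positivity)]
  gcongr

open Polynomial in
/-- The inequality `cosh x ≤ 1 / cos x` gives `T_n(1 / cos x) ≥ cosh (n x)`. -/
theorem exp_le_chebyshev_T (n : ℕ) {x : ℝ} (h0 : 0 ≤ x) (h1 : x < π / 2) :
    exp (n * x) ≤ 2 * (Chebyshev.T ℝ n).eval (1 / cos x) := by
  have hc : 0 < cos x := cos_pos_of_mem_Ioo ⟨by linarith [pi_pos], h1⟩
  have h := chebyshev_T_mono n (one_le_cosh x)
    (show cosh x ≤ 1 / cos x by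
      rw [le_div_iff₀ hc, mul_comm]; exact cos_mul_cosh_le_one h0 (by linarith [pi_pos]))
  rw [Chebyshev.T_real_cosh, cosh_eq] at h
  have := exp_pos (-(((n : ℕ) : ℤ) * x))
  push_cast at *
  linarith

open Polynomial in
/-- By Cayley–Hamilton, traces of powers of a `2 × 2` matrix satisfy the Chebyshev recursion. -/
theorem trace_pow_chebyshev (M : Matrix (Fin 2) (Fin 2) ℂ) (s y : ℂ)
    (ht : M.trace = 2 * s * y) (hd : M.det = s ^ 2) (n : ℕ) :
    (M ^ n).trace = 2 * s ^ n * (Chebyshev.T ℂ n).eval y := by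
  have hCH : M * M = M.trace • M - M.det • (1 : Matrix (Fin 2) (Fin 2) ℂ) := by
    ext i j
    fin_cases i <;> fin_cases j <;>
      simp [Matrix.mul_apply, Matrix.trace_fin_two, Matrix.det_fin_two] <;> ring
  induction n using Nat.twoStepInduction with
  | zero => simp
  | one => simp [ht]
  | more n h0 h1 =>
    have e : M ^ (n + 2) = M.trace • M ^ (n + 1) - M.det • M ^ n := by
      rw [pow_succ, pow_succ, mul_assoc, hCH, mul_sub, mul_smul_comm, mul_smul_comm, mul_one,
        ← pow_succ]
    rw [e, Matrix.trace_sub, Matrix.trace_smul, Matrix.trace_smul, h0, h1, ht, hd]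
    have : (((n + 2 : ℕ) : ℤ)) = (n : ℤ) + 2 := by push_cast; ring
    rw [this, Chebyshev.T_add_two]
    push_cast
    simp
    ring

/-! ### Ordered products and traces -/

/-- The ordered product `f (m - 1) * ⋯ * f 1 * f 0`. -/
def revProd {R : Type*} [Monoid R] (f : ℕ → R) (m : ℕ) : R :=
  (((List.range m).map f).reverse).prod

theorem revProd_zero {R : Type*} [Monoid R] (f : ℕ → R) : revProd f 0 = 1 := by
  simp [revProd]

theorem revProd_succ {R : Type*} [Monoid R] (f : ℕ → R) (m : ℕ) :
    revProd f (m + 1) = f m * revProd f m := by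
  simp [revProd, List.range_succ]

theorem revProd_succ' {R : Type*} [Monoid R] (f : ℕ → R) (m : ℕ) :
    revProd f (m + 1) = revProd (fun i => f (i + 1)) m * f 0 := by
  simp [revProd, List.range_succ_eq_map, Function.comp_def]

theorem revProd_congr {R : Type*} [Monoid R] {f g : ℕ → R} {m : ℕ}
    (h : ∀ i < m, f i = g i) : revProd f m = revProd g m := by
  induction m with
  | zero => simp [revProd_zero]
  | succ m ih => rw [revProd_succ, revProd_succ, h m (by omega), ih fun i hi => h i (by omega)]

theorem revProd_smul (k : ℕ → ℂ) (f : ℕ → Matrix (Fin 2) (Fin 2) ℂ) (m : ℕ) :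
    revProd (fun n => k n • f n) m = (∏ n ∈ Finset.range m, k n) • revProd f m := by
  induction m with
  | zero => simp [revProd_zero]
  | succ m ih =>
    rw [revProd_succ, revProd_succ, ih, Finset.prod_range_succ, smul_mul_smul_comm, mul_comm]

theorem revProd_transpose (g : ℕ → Matrix (Fin 2) (Fin 2) ℂ) (m : ℕ) :
    (revProd g m).transpose = revProd (fun i => (g (m - 1 - i)).transpose) m := by
  induction m with
  | zero => simp [revProd_zero]
  | succ m ih =>
    rw [revProd_succ, revProd_succ', Matrix.transpose_mul, ih]
    congr 1
    exact revProd_congr fun i _ => by congr 2; omega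

/-- Coefficients in `x` of the ordered product of the factors `A + x ω ^ n B`. -/
def qCoeff (A B : Matrix (Fin 2) (Fin 2) ℂ) (w : ℂ) : ℕ → ℕ → Matrix (Fin 2) (Fin 2) ℂ
  | 0, 0 => 1
  | 0, _ + 1 => 0
  | m + 1, 0 => A * qCoeff A B w m 0
  | m + 1, k + 1 => A * qCoeff A B w m (k + 1) + w ^ m • (B * qCoeff A B w m k)

theorem qCoeff_eq_zero (A B : Matrix (Fin 2) (Fin 2) ℂ) (w : ℂ) (m k : ℕ) (h : m < k) :
    qCoeff A B w m k = 0 := by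
  induction m generalizing k with
  | zero => obtain ⟨k, rfl⟩ := Nat.exists_eq_succ_of_ne_zero (by omega : k ≠ 0); rfl
  | succ m ih =>
    obtain ⟨k, rfl⟩ := Nat.exists_eq_succ_of_ne_zero (by omega : k ≠ 0)
    simp [qCoeff, ih (k + 1) (by omega), ih k (by omega)]

theorem qCoeff_zero (A B : Matrix (Fin 2) (Fin 2) ℂ) (w : ℂ) (m : ℕ) :
    qCoeff A B w m 0 = A ^ m := by
  induction m with
  | zero => simp [qCoeff]
  | succ m ih => rw [qCoeff, ih, pow_succ']

theorem qCoeff_self (A B : Matrix (Fin 2) (Fin 2) ℂ) (w : ℂ) (m : ℕ) :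
    qCoeff A B w m m = w ^ (∑ i ∈ Finset.range m, i) • B ^ m := by
  induction m with
  | zero => simp [qCoeff]
  | succ m ih =>
    rw [qCoeff, qCoeff_eq_zero _ _ _ _ _ (Nat.lt_succ_self m), ih, Finset.sum_range_succ, pow_add,
      pow_succ' B, mul_smul_comm, smul_smul, mul_zero, zero_add, mul_comm]

theorem revProd_eq_sum (A B : Matrix (Fin 2) (Fin 2) ℂ) (w x : ℂ) (m : ℕ) :
    revProd (fun n => A + (w ^ n * x) • B) m
      = ∑ k ∈ Finset.range (m + 1), x ^ k • qCoeff A B w m k := by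
  induction m with
  | zero => simp [revProd_zero, qCoeff]
  | succ m ih =>
    rw [revProd_succ, ih, Finset.sum_range_succ' _ (m + 1), add_mul, Finset.mul_sum,
      Finset.mul_sum]
    simp only [qCoeff, smul_add, Finset.sum_add_distrib]
    rw [Finset.sum_range_succ' _ m, Finset.sum_range_succ (fun k => x ^ (k + 1) • (A * _)) m,
      qCoeff_eq_zero _ _ _ _ _ (Nat.lt_succ_self m)]
    have h1 : ∀ k, A * x ^ k • qCoeff A B w m k = x ^ k • (A * qCoeff A B w m k) :=
      fun k => mul_smul_comm _ _ _
    have h2 : ∀ k, (w ^ m * x) • B * x ^ k • qCoeff A B w m k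
        = x ^ (k + 1) • w ^ m • (B * qCoeff A B w m k) := fun k => by
      rw [smul_mul_smul_comm, smul_smul]; congr 1; ring
    simp only [h1, h2, mul_zero, smul_zero, add_zero]
    abel

/-- Cyclicity of the trace makes `tr ∏ (A + x ω ^ n B)` invariant under `x ↦ ω x`, so that only
the extreme coefficients in `x` survive. -/
theorem trace_revProd (A B : Matrix (Fin 2) (Fin 2) ℂ) {w : ℂ} {L : ℕ} (hL : 0 < L)
    (hw : IsPrimitiveRoot w L) :
    (revProd (fun n => A + w ^ n • B) L).trace
      = (A ^ L).trace + w ^ (∑ i ∈ Finset.range L, i) * (B ^ L).trace := by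
  set P : ℂ → ℂ := fun x => (revProd (fun n => A + (w ^ n * x) • B) L).trace with hP
  have hinv : ∀ x, P (w * x) = P x := by
    intro x
    obtain ⟨m, rfl⟩ := Nat.exists_eq_succ_of_ne_zero hL.ne'
    simp only [hP]
    rw [Nat.succ_eq_add_one, revProd_succ, revProd_succ', Matrix.trace_mul_comm]
    have e0 : w ^ m * (w * x) = w ^ 0 * x := by
      rw [← mul_assoc, ← pow_succ, hw.pow_eq_one, pow_zero]
    rw [e0]
    congr 3
    funext i
    congr 2
    ring
  have hpow : ∀ j : ℕ, P (w ^ j) = P 1 := by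
    intro j
    induction j with
    | zero => simp
    | succ j ih => rw [pow_succ', hinv, ih]
  have hexp : ∀ x, P x = ∑ k ∈ Finset.range (L + 1), x ^ k * (qCoeff A B w L k).trace := by
    intro x
    simp only [hP]
    rw [revProd_eq_sum, Matrix.trace_sum]
    simp [Matrix.trace_smul]
  have hsum : ∑ j ∈ Finset.range L, P (w ^ j) = L * P 1 := by
    simp [hpow]
  have hsum2 : ∑ j ∈ Finset.range L, P (w ^ j)
      = L * ((qCoeff A B w L 0).trace + (qCoeff A B w L L).trace) := by
    simp only [hexp]
    rw [Finset.sum_comm]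
    simp only [← Finset.sum_mul]
    rw [Finset.sum_range_succ, ← Nat.succ_pred_eq_of_pos hL, Finset.sum_range_succ']
    rw [Nat.succ_pred_eq_of_pos hL]
    rw [Finset.sum_eq_zero]
    · have : ∀ j, (w ^ j) ^ L = 1 := fun j => by rw [pow_right_comm, hw.pow_eq_one, one_pow]
      simp [this]
      ring
    · intro k hk
      have hk' : k + 1 < L := by
        have := Finset.mem_range.1 hk
        have := Nat.succ_pred_eq_of_pos hL
        omega
      have hne : w ^ (k + 1) ≠ 1 := hw.pow_ne_one_of_pos_of_lt (by omega) hk'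
      have : ∑ j ∈ Finset.range L, (w ^ j) ^ (k + 1) = 0 := by
        simp only [fun j => pow_right_comm w j (k + 1)]
        rw [geom_sum_eq hne, pow_right_comm, hw.pow_eq_one]
        simp
      rw [this, zero_mul]
  have hL0 : (L : ℂ) ≠ 0 := by exact_mod_cast hL.ne'
  have h := mul_left_cancel₀ hL0 (hsum.symm.trans hsum2)
  rw [qCoeff_zero, qCoeff_self, Matrix.trace_smul, smul_eq_mul] at h
  simpa [hP] using h

/-! ### Spectral decomposition of an isometry -/

theorem norm_eigenvalue_of_isometry {V : Type*} [NormedAddCommGroup V] [InnerProductSpace ℂ V]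
    {U : Module.End ℂ V} (hU : ∀ x y, inner ℂ (U x) (U y) = inner ℂ x y)
    {x : V} {μ : ℂ} (hx : U x = μ • x) (hx0 : x ≠ 0) : ‖μ‖ = 1 := by
  have h := hU x x
  rw [inner_self_eq_norm_sq_to_K, inner_self_eq_norm_sq_to_K, hx, norm_smul] at h
  have h' : (‖μ‖ * ‖x‖) ^ 2 = ‖x‖ ^ 2 := by exact_mod_cast h
  have h'' := (pow_left_inj₀ (by positivity) (by positivity) two_ne_zero).1 h'
  exact mul_right_cancel₀ (norm_ne_zero_iff.2 hx0) (h''.trans (one_mul _).symm)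

theorem inner_eigenvectors_eq_zero {V : Type*} [NormedAddCommGroup V] [InnerProductSpace ℂ V]
    {U : Module.End ℂ V} (hU : ∀ x y, inner ℂ (U x) (U y) = inner ℂ x y)
    {x y : V} {μ ν : ℂ} (hx : U x = μ • x) (hy : U y = ν • y) (h : μ ≠ ν) :
    inner ℂ x y = 0 := by
  by_cases hx0 : x = 0
  · simp [hx0]
  have hμ := norm_eigenvalue_of_isometry hU hx hx0
  have hμ' : (starRingEnd ℂ) μ * μ = 1 := by
    rw [mul_comm, Complex.mul_conj, Complex.normSq_eq_norm_sq, hμ]; simp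
  have h1 := hU x y
  rw [hx, hy, inner_smul_left, inner_smul_right, ← mul_assoc] at h1
  by_contra h0
  have h2 : (starRingEnd ℂ) μ * ν = 1 := mul_right_cancel₀ h0 (h1.trans (one_mul _).symm)
  have h3 : (starRingEnd ℂ) μ ≠ 0 := left_ne_zero_of_mul_eq_one hμ'
  exact h (mul_left_cancel₀ h3 (hμ'.trans h2.symm))

/-- A linear isometry of a finite-dimensional complex inner product space is diagonalizable: the
orthogonal complement of the span of its eigenvectors is invariant and contains no eigenvector. -/
theorem iSup_eigenspace_eq_top_of_isometry {V : Type*} [NormedAddCommGroup V]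
    [InnerProductSpace ℂ V] [FiniteDimensional ℂ V]
    {U : Module.End ℂ V} (hU : ∀ x y, inner ℂ (U x) (U y) = inner ℂ x y) :
    ⨆ μ : ℂ, Module.End.eigenspace U μ = ⊤ := by
  set S := ⨆ μ : ℂ, Module.End.eigenspace U μ with hS
  have hinv : ∀ x ∈ Sᗮ, U x ∈ Sᗮ := by
    intro x hx
    rw [hS, ← Submodule.iInf_orthogonal, Submodule.mem_iInf] at hx ⊢
    intro μ y hy
    rw [Module.End.mem_eigenspace_iff] at hy
    have hxy : inner ℂ y x = 0 := hx μ y (Module.End.mem_eigenspace_iff.2 hy)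
    by_cases hy0 : y = 0
    · simp [hy0]
    have hμ := norm_eigenvalue_of_isometry hU hy hy0
    have h1 := hU y x
    rw [hy, inner_smul_left, hxy] at h1
    refine (mul_eq_zero.1 h1).resolve_left ?_
    intro h0
    rw [map_eq_zero] at h0
    simp [h0] at hμ
  rw [← Submodule.orthogonal_eq_bot_iff]
  by_contra hne
  have hnt : Nontrivial Sᗮ := Submodule.nontrivial_iff_ne_bot.2 hne
  obtain ⟨μ, hμ⟩ := Module.End.exists_eigenvalue (U.restrict hinv)
  obtain ⟨v, hv, hv0⟩ := hμ.exists_hasEigenvector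
  rw [Module.End.mem_eigenspace_iff] at hv
  have hv' : U (v : V) = μ • (v : V) := congrArg Subtype.val hv
  have hvS : (v : V) ∈ S :=
    (le_iSup (fun μ => Module.End.eigenspace U μ) μ) (Module.End.mem_eigenspace_iff.2 hv')
  have h0 : inner ℂ (v : V) (v : V) = 0 := v.2 v hvS
  exact hv0 (Subtype.ext (inner_self_eq_zero.1 h0))

/-- The eigencomponents are indexed by the eigenvalue. -/
theorem exists_eigen_decomposition {V : Type*} [NormedAddCommGroup V]
    [InnerProductSpace ℂ V] [FiniteDimensional ℂ V]
    {U : Module.End ℂ V} (hU : ∀ x y, inner ℂ (U x) (U y) = inner ℂ x y) (v : V) :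
    ∃ (s : Finset ℂ) (f : ℂ → V), (∀ μ, U (f μ) = μ • f μ) ∧ ∑ μ ∈ s, f μ = v := by
  have hv : v ∈ ⨆ μ : ℂ, Module.End.eigenspace U μ := by
    rw [iSup_eigenspace_eq_top_of_isometry hU]; trivial
  obtain ⟨f, hf, hs⟩ := (Submodule.mem_iSup_iff_exists_finsupp _ _).1 hv
  exact ⟨f.support, f, fun μ => Module.End.mem_eigenspace_iff.1 (hf μ), hs⟩

theorem norm_sq_sum_of_orthogonal {V ι : Type*} [NormedAddCommGroup V] [InnerProductSpace ℂ V]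
    (s : Finset ι) (g : ι → V) (h : ∀ i j, i ≠ j → inner ℂ (g i) (g j) = 0) :
    ‖∑ i ∈ s, g i‖ ^ 2 = ∑ i ∈ s, ‖g i‖ ^ 2 := by
  classical
  induction s using Finset.induction_on with
  | empty => simp
  | insert a s ha ih =>
    have h0 : inner ℂ (g a) (∑ i ∈ s, g i) = 0 := by
      rw [inner_sum]
      exact Finset.sum_eq_zero fun i hi => h a i fun e => ha (e ▸ hi)
    rw [Finset.sum_insert ha, Finset.sum_insert ha, ← ih, sq, sq, sq,
      norm_add_sq_eq_norm_sq_add_norm_sq_of_inner_eq_zero _ _ h0]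

/-- The reflection `2P - 1` about the range of an orthogonal projection is an isometry. -/
theorem inner_reflection {V : Type*} [NormedAddCommGroup V] [InnerProductSpace ℂ V]
    {P : Module.End ℂ V} (hi : P ∘ₗ P = P) (hs : P.IsSymmetric) (x y : V) :
    inner ℂ (((2 : ℂ) • P - 1) x) (((2 : ℂ) • P - 1) y) = inner ℂ x y := by
  have h : P (P y) = P y := LinearMap.congr_fun hi y
  have h1 : inner ℂ (P x) (P y) = inner ℂ x (P y) := by rw [hs x (P y), h]
  have h2 : inner ℂ (P x) y = inner ℂ x (P y) := hs x y
  simp only [LinearMap.sub_apply, LinearMap.smul_apply, Module.End.one_apply, inner_sub_left,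
    inner_sub_right, inner_smul_left, inner_smul_right, h1, h2, map_ofNat]
  ring

/-! ### The circuit over an eigenvector -/

/-- The pure tensor `x ⊗ v` in `ℂ² ⊗ V ≅ V × V`. -/
def qtensor {V : Type*} [AddCommGroup V] [Module ℂ V] (x : Fin 2 → ℂ) (v : V) : V × V :=
  (x 0 • v, x 1 • v)

theorem opTensor_qtensor {V : Type*} [AddCommGroup V] [Module ℂ V]
    (M : Matrix (Fin 2) (Fin 2) ℂ) (x : Fin 2 → ℂ) (v : V) :
    opTensor M (qtensor x v) = qtensor (M.mulVec x) v := by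
  simp [opTensor, qtensor, Matrix.mulVec, dotProduct, Fin.sum_univ_two, add_smul, smul_smul]

/-- The phase matrix `diag(1, μ)`: the action of `Λ(U)` on the ancilla over a `μ`-eigenvector. -/
def phaseMat (μ : ℂ) : Matrix (Fin 2) (Fin 2) ℂ := !![1, 0; 0, μ]

theorem ctrlOp_qtensor {V : Type*} [AddCommGroup V] [Module ℂ V]
    {U : Module.End ℂ V} {v : V} {μ : ℂ} (hv : U v = μ • v) (x : Fin 2 → ℂ) :
    ctrlOp U (qtensor x v) = qtensor ((phaseMat μ).mulVec x) v := by
  simp [ctrlOp, qtensor, phaseMat, hv, smul_smul, mul_comm, Matrix.mulVec, dotProduct,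
    Fin.sum_univ_two]

/-- The product of the controlled phases and `R_y` rotations on the ancilla, over a
`μ`-eigenvector. -/
noncomputable def innerMat (lam : ℝ) (L : ℕ) (μ : ℂ) : Matrix (Fin 2) (Fin 2) ℂ :=
  revProd (fun n => phaseMat μ * Ry (qpdTheta lam L n)) L

/-- The amplitude `⟨0|C|0⟩` of the circuit over a `μ`-eigenvector. -/
noncomputable def qpdAmp (lam : ℝ) (L : ℕ) (μ : ℂ) : ℂ :=
  (Rx (-(π / 2)) * innerMat lam L μ * Rx (π / 2)) 0 0

theorem revProd_qtensor {V : Type*} [AddCommGroup V] [Module ℂ V] {v : V}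
    {F : ℕ → Module.End ℂ (V × V)} {g : ℕ → Matrix (Fin 2) (Fin 2) ℂ}
    (h : ∀ n x, F n (qtensor x v) = qtensor ((g n).mulVec x) v) (m : ℕ) (x : Fin 2 → ℂ) :
    revProd F m (qtensor x v) = qtensor ((revProd g m).mulVec x) v := by
  induction m with
  | zero => simp [revProd_zero]
  | succ m ih =>
    rw [revProd_succ, revProd_succ, Module.End.mul_apply, ih, h, Matrix.mulVec_mulVec]

theorem qpdCircuit_eigenvector {V : Type*} [AddCommGroup V] [Module ℂ V]
    {U : Module.End ℂ V} {v : V} {μ : ℂ} (hv : U v = μ • v) (lam : ℝ) (L : ℕ) :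
    (qpdCircuit U lam L (v, 0)).1 = qpdAmp lam L μ • v := by
  have e : (v, (0 : V)) = qtensor ![1, 0] v := by simp [qtensor]
  have h : ∀ n x,
      (ctrlOp U * opTensor (Ry (qpdTheta lam L n)) : Module.End ℂ (V × V)) (qtensor x v)
      = qtensor ((phaseMat μ * Ry (qpdTheta lam L n)).mulVec x) v := fun n x => by
    rw [Module.End.mul_apply, opTensor_qtensor, ctrlOp_qtensor hv, Matrix.mulVec_mulVec]
  have h' : qpdCircuit U lam L (qtensor ![1, 0] v)
      = qtensor ((Rx (-(π / 2)) * innerMat lam L μ * Rx (π / 2)).mulVec ![1, 0]) v := by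
    change (opTensor (Rx (-(π / 2))) *
      revProd (fun n => ctrlOp U * opTensor (Ry (qpdTheta lam L n))) L *
      opTensor (Rx (π / 2)) : Module.End ℂ (V × V)) _ = _
    rw [Module.End.mul_apply, Module.End.mul_apply, opTensor_qtensor, revProd_qtensor h,
      opTensor_qtensor, Matrix.mulVec_mulVec, Matrix.mulVec_mulVec]
    rfl
  rw [e, h']
  simp [qtensor, qpdAmp, Matrix.mulVec, dotProduct, Fin.sum_univ_two]

/-! ### The filter amplitude -/

theorem qpdTheta_zero (lam : ℝ) (L : ℕ) : qpdTheta lam L 0 = 0 := by simp [qpdTheta]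

theorem qpdTheta_reflect (lam : ℝ) {L n : ℕ} (hL : 0 < L) (hn : n ≤ L) :
    qpdTheta lam L (L - n) = -qpdTheta lam L n := by
  have hL' : (L : ℝ) ≠ 0 := by exact_mod_cast hL.ne'
  have e : ((L - n : ℕ) : ℝ) * π / L = π - n * π / L := by
    rw [Nat.cast_sub hn]; field_simp
  rw [qpdTheta, qpdTheta, e, tan_pi_sub, mul_neg, arctan_neg, mul_neg]

theorem Ry_transpose (θ : ℝ) : (Ry θ).transpose = Ry (-θ) := by
  ext i j
  fin_cases i <;> fin_cases j <;> simp [Ry, neg_div]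

theorem Ry_zero : Ry 0 = 1 := by
  ext i j
  fin_cases i <;> fin_cases j <;> simp [Ry]

theorem Ry_mul (a b : ℝ) : Ry a * Ry b = Ry (a + b) := by
  ext i j
  fin_cases i <;> fin_cases j <;>
    simp [Ry, Matrix.mul_apply, Fin.sum_univ_two, add_div, Complex.cos_add, Complex.sin_add] <;>
    ring

theorem phaseMat_transpose (μ : ℂ) : (phaseMat μ).transpose = phaseMat μ := by
  ext i j
  fin_cases i <;> fin_cases j <;> simp [phaseMat]

/-- The antisymmetry `θ_{L-n} = -θ_n` of the angles makes the inner product of matrices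
symmetric. -/
theorem innerMat_transpose (lam : ℝ) {L : ℕ} (hL : 0 < L) (μ : ℂ) :
    (innerMat lam L μ).transpose = innerMat lam L μ := by
  obtain ⟨m, rfl⟩ := Nat.exists_eq_succ_of_ne_zero hL.ne'
  have hcomm : ∀ k,
      phaseMat μ * revProd (fun i => Ry (qpdTheta lam (m + 1) (i + 1)) * phaseMat μ) k
      = revProd (fun i => phaseMat μ * Ry (qpdTheta lam (m + 1) (i + 1))) k * phaseMat μ := by
    intro k
    induction k with
    | zero => simp [revProd_zero]
    | succ k ih =>
      rw [revProd_succ, revProd_succ, mul_assoc _ _ (phaseMat μ), ← ih]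
      simp only [mul_assoc]
  rw [innerMat, Nat.succ_eq_add_one, revProd_succ', qpdTheta_zero, Ry_zero, mul_one,
    Matrix.transpose_mul, phaseMat_transpose, revProd_transpose, ← hcomm]
  congr 1
  refine revProd_congr fun i hi => ?_
  have e : m - 1 - i + 1 = m + 1 - (i + 1) := by omega
  rw [Matrix.transpose_mul, Ry_transpose, phaseMat_transpose, e,
    qpdTheta_reflect lam (by omega) (by omega), neg_neg]

/-- Conjugation by `R_x(±π/2)` contributes the antisymmetric part of the inner matrix, which
vanishes. -/
theorem qpdAmp_eq_trace (lam : ℝ) {L : ℕ} (hL : 0 < L) (μ : ℂ) :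
    qpdAmp lam L μ = (innerMat lam L μ).trace / 2 := by
  have hs : innerMat lam L μ 1 0 = innerMat lam L μ 0 1 :=
    congrFun (congrFun (innerMat_transpose lam hL μ) 0) 1
  have h4 : π / 2 / 2 = π / 4 := by ring
  have h4' : -(π / 2) / 2 = -(π / 4) := by ring
  have h2 : ((√2 : ℝ) : ℂ) * ((√2 : ℝ) : ℂ) = 2 := by
    rw [← Complex.ofReal_mul, mul_self_sqrt (by norm_num)]; norm_num
  simp only [qpdAmp, Rx, Matrix.mul_apply, Fin.sum_univ_two, Matrix.trace_fin_two, h4, h4',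
    cos_neg, sin_neg, cos_pi_div_four, sin_pi_div_four, hs]
  simp
  linear_combination (innerMat lam L μ 0 0 / 4 - Complex.I ^ 2 * innerMat lam L μ 1 1 / 4) * h2
    - innerMat lam L μ 1 1 / 2 * Complex.I_sq

/-- At phase `0` the rotations compose to `Ry (∑ θ_n) = Ry 0`. -/
theorem qpdAmp_one (lam : ℝ) {L : ℕ} (hL : 0 < L) : qpdAmp lam L 1 = 1 := by
  have h1 : phaseMat 1 = 1 := by
    ext i j
    fin_cases i <;> fin_cases j <;> simp [phaseMat]
  have hprod : ∀ m, revProd (fun n => phaseMat 1 * Ry (qpdTheta lam L n)) m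
      = Ry (∑ n ∈ Finset.range m, qpdTheta lam L n) := by
    intro m
    induction m with
    | zero => simp [revProd_zero, Ry_zero]
    | succ m ih => rw [revProd_succ, ih, h1, one_mul, Ry_mul, Finset.sum_range_succ, add_comm]
  have hsum : ∑ n ∈ Finset.range L, qpdTheta lam L n = 0 := by
    obtain ⟨m, rfl⟩ := Nat.exists_eq_succ_of_ne_zero hL.ne'
    rw [Nat.succ_eq_add_one, Finset.sum_range_succ', qpdTheta_zero, add_zero]
    have h := Finset.sum_range_reflect (fun i => qpdTheta lam (m + 1) (i + 1)) m
    have h' : ∑ j ∈ Finset.range m, qpdTheta lam (m + 1) (m - 1 - j + 1)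
        = -∑ j ∈ Finset.range m, qpdTheta lam (m + 1) (j + 1) := by
      rw [← Finset.sum_neg_distrib]
      refine Finset.sum_congr rfl fun j hj => ?_
      have := Finset.mem_range.1 hj
      have e : m - 1 - j + 1 = m + 1 - (j + 1) := by omega
      rw [e, qpdTheta_reflect lam (by omega) (by omega)]
    rw [h'] at h
    linarith
  rw [qpdAmp_eq_trace lam hL, innerMat, hprod, hsum, Ry_zero]
  simp

/-- The matrix `(1 + sY) / 2`, with `Y` the Pauli matrix generating the rotations `Ry`. -/
noncomputable def halfMat (s : ℂ) : Matrix (Fin 2) (Fin 2) ℂ :=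
  !![1 / 2, -(Complex.I * s) / 2; Complex.I * s / 2, 1 / 2]

/-- For odd `L` the nodes `nπ/L` avoid the poles of `tan`. -/
theorem cos_node_ne_zero {L : ℕ} (hL : Odd L) (n : ℕ) : cos (n * π / L) ≠ 0 := by
  intro h
  obtain ⟨k, hk⟩ := Real.cos_eq_zero_iff.1 h
  have hL' : (L : ℝ) ≠ 0 := by
    have := hL.pos
    exact_mod_cast this.ne'
  have h2 : (2 * n : ℝ) = (2 * k + 1) * L := by
    field_simp at hk
    nlinarith [pi_pos]
  have h3 : (2 * n : ℤ) = (2 * k + 1) * L := by exact_mod_cast h2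
  have h4 : Odd ((2 * k + 1) * (L : ℤ)) :=
    Odd.mul ⟨k, rfl⟩ (by exact_mod_cast hL)
  rw [← h3] at h4
  exact (Int.not_even_iff_odd.2 h4) ⟨n, by ring⟩

/-- Up to a scalar, `Ry(θ_n)` is affine in the root of unity `exp(2πi n/L)`. -/
theorem Ry_qpdTheta (lam : ℝ) {L : ℕ} (hL : Odd L) (n : ℕ) :
    ∃ k : ℂ, Ry (qpdTheta lam L n) = k • (halfMat (sin (lam / 2)) +
      Complex.exp (2 * π * Complex.I / L) ^ n • halfMat (-sin (lam / 2))) := by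
  set x : ℝ := n * π / L with hx
  set t := sin (lam / 2) * tan x with ht
  have hc : (cos x : ℂ) ≠ 0 := by exact_mod_cast cos_node_ne_zero hL n
  have hw : Complex.exp (2 * π * Complex.I / L) ^ n
      = ((cos x : ℂ) + sin x * Complex.I) ^ 2 := by
    rw [← Complex.exp_nat_mul, Complex.ofReal_cos, Complex.ofReal_sin, ← Complex.exp_mul_I, sq,
      ← Complex.exp_add]
    congr 1
    rw [hx]; push_cast; ring
  have hcs : (cos x : ℂ) ^ 2 + (sin x : ℂ) ^ 2 = 1 := by
    exact_mod_cast cos_sq_add_sin_sq x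
  have hθ : qpdTheta lam L n / 2 = arctan t := by rw [qpdTheta]; ring
  have hcos : cos (arctan t) = 1 / √(1 + t ^ 2) := cos_arctan t
  have hsin : sin (arctan t) = t / √(1 + t ^ 2) := sin_arctan t
  have htc : (t : ℂ) * cos x = sin (lam / 2) * sin x := by
    have h : t * cos x = sin (lam / 2) * sin x := by
      rw [ht, mul_assoc, tan_mul_cos (cos_node_ne_zero hL n)]
    exact_mod_cast h
  have htc' : (t : ℂ) = sin (lam / 2) * sin x / cos x := by rw [← htc]; field_simp
  refine ⟨((1 / √(1 + t ^ 2) : ℝ) : ℂ) * ((cos x : ℂ) - sin x * Complex.I) / cos x, ?_⟩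
  have hI := Complex.I_sq
  set c : ℂ := (cos x : ℂ)
  set s : ℂ := (sin x : ℂ)
  set r : ℂ := ((1 / √(1 + t ^ 2) : ℝ) : ℂ)
  set σ : ℂ := (sin (lam / 2) : ℂ)
  have hcos' : (cos (arctan t) : ℂ) = r := by rw [hcos]
  have hsin' : (sin (arctan t) : ℂ) = r * (σ * s / c) := by
    rw [hsin, ← htc', ← Complex.ofReal_mul]; congr 1; ring
  have h0 : (c - s * Complex.I) * (c + s * Complex.I) = 1 := by
    linear_combination hcs - s ^ 2 * hI
  have h1 : (c - s * Complex.I) * (1 + (c + s * Complex.I) ^ 2) = 2 * c := by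
    linear_combination (c + s * Complex.I) * h0
  have h2 : (c - s * Complex.I) * (1 - (c + s * Complex.I) ^ 2) = -(2 * s * Complex.I) := by
    linear_combination -(c + s * Complex.I) * h0
  have hR : Ry (qpdTheta lam L n) = !![r, -(r * (σ * s / c)); r * (σ * s / c), r] := by
    rw [Ry, hθ, hcos', hsin']
  rw [hw, hR]
  generalize (c + s * Complex.I) ^ 2 = w at h1 h2
  generalize c - s * Complex.I = q at h1 h2
  clear_value c s r σ
  ext i j
  fin_cases i <;> fin_cases j <;> simp [halfMat] <;> field_simp
  · linear_combination -r * h1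
  · linear_combination r * (σ * Complex.I * h2 - 2 * s * σ * hI)
  · linear_combination -r * (σ * Complex.I * h2 - 2 * s * σ * hI)
  · linear_combination -r * h1

open Polynomial in
/-- The amplitude over a phase `ν ^ 2` is a constant multiple of a Chebyshev polynomial. -/
theorem exists_qpdAmp_eq (lam : ℝ) {L : ℕ} (hL : Odd L) (hγ : cos (lam / 2) ≠ 0) :
    ∃ K : ℂ, ∀ (ν : ℂ) (c : ℝ), 1 + ν ^ 2 = 2 * ν * c →
      qpdAmp lam L (ν ^ 2) = K * ν ^ L * (((Chebyshev.T ℝ L).eval (c / cos (lam / 2)) : ℝ) : ℂ) := by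
  choose k hk using Ry_qpdTheta lam hL
  set w := Complex.exp (2 * π * Complex.I / L)
  have hw : IsPrimitiveRoot w L := Complex.isPrimitiveRoot_exp L hL.pos.ne'
  set g : ℂ := (cos (lam / 2) : ℂ) with hg
  have hg0 : g ≠ 0 := by rw [hg]; exact_mod_cast hγ
  have hpy : ((sin (lam / 2) : ℝ) : ℂ) ^ 2 + g ^ 2 = 1 := by
    rw [hg]; exact_mod_cast sin_sq_add_cos_sq (lam / 2)
  set σ : ℂ := ((sin (lam / 2) : ℝ) : ℂ)
  refine ⟨(∏ n ∈ Finset.range L, k n) * (1 + w ^ (∑ i ∈ Finset.range L, i)) * (g / 2) ^ L,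
    fun ν c hc => ?_⟩
  have hm : innerMat lam L (ν ^ 2) = (∏ n ∈ Finset.range L, k n) •
      revProd (fun n => phaseMat (ν ^ 2) * halfMat σ + w ^ n • (phaseMat (ν ^ 2) * halfMat (-σ)))
        L := by
    rw [← revProd_smul, innerMat]
    refine revProd_congr fun n _ => ?_
    rw [hk n, mul_smul_comm, mul_add, mul_smul_comm]
  have htr : ∀ τ : ℂ, τ ^ 2 = σ ^ 2 → ((phaseMat (ν ^ 2) * halfMat τ) ^ L).trace
      = 2 * (ν * (g / 2)) ^ L * (Chebyshev.T ℂ L).eval ((c : ℂ) / g) := by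
    intro τ hτ
    apply trace_pow_chebyshev
    · simp [Matrix.trace_fin_two, phaseMat, halfMat]
      field_simp
      linear_combination hc
    · simp [Matrix.det_fin_two, phaseMat, halfMat]
      linear_combination ν ^ 2 / 4 * (τ ^ 2 * Complex.I_sq - hτ - hpy)
  rw [qpdAmp_eq_trace lam hL.pos, hm, Matrix.trace_smul, trace_revProd _ _ hL.pos hw,
    htr σ rfl, htr (-σ) (neg_sq σ), Chebyshev.complex_ofReal_eval_T, Complex.ofReal_div, ← hg,
    mul_pow, smul_eq_mul]
  ring

open Polynomial in
/-- The constant of proportionality is determined by the amplitude `1` at phase `0`. -/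
theorem norm_qpdAmp {lam : ℝ} {L : ℕ} (hL : Odd L) (h0 : 0 < cos (lam / 2)) (α : ℝ) :
    ‖qpdAmp lam L (Complex.exp (α * Complex.I))‖
      = |(Chebyshev.T ℝ L).eval (cos (α / 2) / cos (lam / 2))|
        / (Chebyshev.T ℝ L).eval (1 / cos (lam / 2)) := by
  obtain ⟨K, hK⟩ := exists_qpdAmp_eq lam hL h0.ne'
  have hT : 1 ≤ (Chebyshev.T ℝ L).eval (1 / cos (lam / 2)) :=
    Chebyshev.one_le_eval_T_real _ (by rw [le_div_iff₀ h0, one_mul]; exact cos_le_one _)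
  have h1 := hK 1 1 (by norm_num)
  rw [one_pow, qpdAmp_one lam hL.pos, one_pow, mul_one] at h1
  have hKn : ‖K‖ * (Chebyshev.T ℝ L).eval (1 / cos (lam / 2)) = 1 := by
    have := congrArg norm h1
    rw [norm_one, norm_mul, Complex.norm_real, norm_of_nonneg (by linarith)] at this
    exact this.symm
  set ν := Complex.exp ((α / 2 : ℝ) * Complex.I) with hν
  have hν2 : Complex.exp (α * Complex.I) = ν ^ 2 := by
    rw [hν, sq, ← Complex.exp_add]; congr 1; push_cast; ring
  have hνc : 1 + ν ^ 2 = 2 * ν * (cos (α / 2) : ℝ) := by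
    have h : ν * Complex.exp (-((α / 2 : ℝ) * Complex.I)) = 1 := by
      rw [hν, ← Complex.exp_add]; simp
    rw [Complex.ofReal_cos, Complex.cos, neg_mul, ← hν]
    linear_combination -h
  have hνn : ‖ν‖ = 1 := Complex.norm_exp_ofReal_mul_I _
  rw [hν2, hK ν _ hνc, norm_mul, norm_mul, norm_pow, hνn, one_pow, mul_one, Complex.norm_real,
    eq_div_iff (by linarith), Real.norm_eq_abs]
  linear_combination |(Chebyshev.T ℝ L).eval (cos (α / 2) / cos (lam / 2))| * hKn

open Polynomial in
/-- Phases of absolute value at least `lam` are damped by the factor `2 exp (-L lam / 2)`; smaller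
phases have amplitude at most `1`, but there `(1 - μ) / 2` has norm at most `lam / 2`. -/
theorem qpdAmp_filter {lam : ℝ} (hl0 : 0 < lam) (hlπ : lam < π) {L : ℕ} (hL : Odd L) {μ : ℂ}
    (hμ : ‖μ‖ = 1) :
    ‖qpdAmp lam L μ‖ ^ 2 * ‖(1 - μ) / 2‖ ^ 2
      ≤ (lam / 2) ^ 2 + (2 * exp (-(L * lam / 2))) ^ 2 * ‖(1 - μ) / 2‖ ^ 2 := by
  have hγ : 0 < cos (lam / 2) := cos_pos_of_mem_Ioo ⟨by linarith, by linarith⟩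
  -- The principal argument lies in `(-π, π]`, so `cos (α / 2) ≥ 0`.
  set α := Complex.arg μ
  have hα : Complex.exp (α * Complex.I) = μ := by
    simpa [hμ] using Complex.norm_mul_exp_arg_mul_I μ
  have hc : 0 ≤ cos (α / 2) := cos_nonneg_of_mem_Icc
    ⟨by linarith [Complex.neg_pi_lt_arg μ], by linarith [Complex.arg_le_pi μ]⟩
  have hgap : ‖(1 - μ) / 2‖ ^ 2 = sin (α / 2) ^ 2 := by
    have h1 : cos α = 1 - 2 * sin (α / 2) ^ 2 := by
      rw [← cos_sq_add_sin_sq (α / 2)]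
      have := cos_two_mul' (α / 2)
      rw [mul_div_cancel₀ α two_ne_zero] at this
      rw [this]; ring
    have h2 := cos_sq_add_sin_sq α
    have h3 : ‖1 - μ‖ ^ 2 = (1 - cos α) * (1 - cos α) + sin α * sin α := by
      rw [← hα, ← Complex.normSq_eq_norm_sq, Complex.normSq_apply, Complex.sub_re, Complex.sub_im,
        Complex.exp_ofReal_mul_I_re, Complex.exp_ofReal_mul_I_im, Complex.one_re, Complex.one_im]
      ring
    rw [norm_div, div_pow, h3, Complex.norm_two]
    linear_combination h2 / 4 - h1 / 2
  have hT : exp (L * lam / 2) ≤ 2 * (Chebyshev.T ℝ L).eval (1 / cos (lam / 2)) := by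
    rw [mul_div_assoc]; exact exp_le_chebyshev_T L (by linarith) (by linarith)
  have hTpos : 0 < (Chebyshev.T ℝ L).eval (1 / cos (lam / 2)) := by
    linarith [exp_pos (L * lam / 2)]
  have hamp := norm_qpdAmp hL hγ α
  rw [hα] at hamp
  rw [hgap]
  rcases le_or_gt (cos (α / 2)) (cos (lam / 2)) with h | h
  · have hle : ‖qpdAmp lam L μ‖ ≤ 2 * exp (-(L * lam / 2)) := by
      have h1 : |(Chebyshev.T ℝ L).eval (cos (α / 2) / cos (lam / 2))| ≤ 1 :=
        Chebyshev.abs_eval_T_real_le_one _ (by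
          rw [abs_of_nonneg (by positivity)]; exact div_le_one_of_le₀ h hγ.le)
      rw [hamp, div_le_iff₀ hTpos, exp_neg]
      refine h1.trans ?_
      rw [mul_right_comm, ← div_eq_mul_inv, le_div_iff₀ (exp_pos _), one_mul]
      exact hT
    have : ‖qpdAmp lam L μ‖ ^ 2 * sin (α / 2) ^ 2
        ≤ (2 * exp (-(L * lam / 2))) ^ 2 * sin (α / 2) ^ 2 := by gcongr
    nlinarith [sq_nonneg (lam / 2)]
  · have hle : ‖qpdAmp lam L μ‖ ≤ 1 := by
      have hx : 1 ≤ cos (α / 2) / cos (lam / 2) := by rw [le_div_iff₀ hγ]; linarith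
      have hxy : cos (α / 2) / cos (lam / 2) ≤ 1 / cos (lam / 2) := by
        gcongr; exact cos_le_one _
      rw [hamp, div_le_one hTpos, abs_of_nonneg
        (zero_le_one.trans (Chebyshev.one_le_eval_T_real _ hx))]
      exact chebyshev_T_mono L hx hxy
    have h1 : sin (α / 2) ^ 2 ≤ (lam / 2) ^ 2 := by
      have h2 : sin (lam / 2) ^ 2 ≤ (lam / 2) ^ 2 := by
        have := sin_le (show 0 ≤ lam / 2 by linarith)
        have := sin_nonneg_of_nonneg_of_le_pi (show 0 ≤ lam / 2 by linarith) (by linarith)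
        gcongr
      have h3 := cos_sq_add_sin_sq (α / 2)
      have h4 := cos_sq_add_sin_sq (lam / 2)
      have h5 : cos (lam / 2) ^ 2 ≤ cos (α / 2) ^ 2 := by gcongr
      linarith
    have h2 : ‖qpdAmp lam L μ‖ ^ 2 ≤ 1 := pow_le_one₀ (norm_nonneg _) hle
    have h3 : 0 ≤ (2 * exp (-(L * lam / 2))) ^ 2 * sin (α / 2) ^ 2 := by positivity
    nlinarith [sq_nonneg (sin (α / 2))]
/-! ### Numerical estimates -/

/-- Normalizing a vector `a φ + w` of squared norm `q ^ 2 = a ^ 2 + ‖w‖ ^ 2`, with `w ⟂ φ`, moves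
it `q⁻¹ √((a - q) ^ 2 + ‖w‖ ^ 2)` away from `φ`. -/
theorem normalization_error {a q ε : ℝ} (ha : 0 < a) (haq : a ≤ q)
    (h : q ^ 2 - a ^ 2 ≤ 3 / 4 * ε ^ 2 * a ^ 2) :
    (a - q) ^ 2 + (q ^ 2 - a ^ 2) ≤ q ^ 2 * ε ^ 2 := by
  -- The left side is `2q(q - a)`, and `2a(q - a) ≤ q² - a²` bounds `q - a`.
  have h1 : 2 * (q - a) ≤ 3 / 4 * ε ^ 2 * a := by
    refine le_of_mul_le_mul_right ?_ ha
    linarith [sq_nonneg (q - a)]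
  have h2 : ε ^ 2 * a ≤ ε ^ 2 * q := by gcongr
  have h3 : 0 ≤ ε ^ 2 * q := mul_nonneg (sq_nonneg _) (ha.le.trans haq)
  have h4 := mul_le_mul_of_nonneg_left (show 2 * (q - a) ≤ ε ^ 2 * q by linarith)
    (ha.le.trans haq)
  linarith

/-- The lower bound on `L` turns the filter's attenuation factor into `√pbar ε / √2`. -/
theorem damping_sq_le {pbar D ε : ℝ} {L : ℕ} (hpbar : 0 < pbar) (hD : 0 < D) (hε0 : 0 < ε)
    (hL : (L : ℝ) ≥ (2 * D / ε) * Real.log (2 * Real.sqrt 2 / (Real.sqrt pbar * ε))) :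
    (2 * exp (-(L * (ε / D) / 2))) ^ 2 ≤ pbar * ε ^ 2 / 2 := by
  have hQ : 0 < 2 * √2 / (√pbar * ε) := by positivity
  have hlog : log (2 * √2 / (√pbar * ε)) ≤ L * (ε / D) / 2 := by
    have e : L * (ε / D) / 2 = L / (2 * D / ε) := by field_simp
    rw [e, le_div_iff₀ (by positivity)]
    linarith
  have hexp : 2 * √2 / (√pbar * ε) ≤ exp (L * (ε / D) / 2) := (log_le_iff_le_exp hQ).1 hlog
  have hδle : 2 * exp (-(L * (ε / D) / 2)) ≤ √pbar * ε / √2 := by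
    rw [exp_neg]
    calc 2 * (exp (L * (ε / D) / 2))⁻¹ ≤ 2 * (2 * √2 / (√pbar * ε))⁻¹ := by gcongr
      _ = √pbar * ε / √2 := by field_simp
  calc (2 * exp (-(L * (ε / D) / 2))) ^ 2 ≤ (√pbar * ε / √2) ^ 2 := by gcongr
    _ = pbar * ε ^ 2 / 2 := by
      rw [div_pow, mul_pow, sq_sqrt hpbar.le, sq_sqrt zero_le_two]

/-! ### Eigenstate filtering -/

/-- Improved eigenstate filtering via quantum phase discrimination
(Lemma 1.8/"Improved Lemma" in the paper).  Let `Π_A, Π_B` be orthogonal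
projections of a finite-dimensional complex inner product space `V`,
`U = (2Π_A − 1)(2Π_B − 1)`, `φv` a unit vector with `U φv = φv`,
`Π_B ϕ = ϕ`, `p ∈ (0,1]`, and `ψ = √p·φv + (1 − Π_A)ϕ` a unit vector.
Given a lower bound `p̄ ≤ p`, an upper bound `D ≥ ‖ϕ‖/√p`, an error
`ε ∈ (0,1)` with `ε/D < π`, and an odd `L ≥ (2D/ε)·ln(2√2/(√p̄·ε))`, applying
`C(U, ε/D, L)` to `e₀ ⊗ ψ` and measuring `|0⟩` on the ancilla succeeds with
probability `p' ∈ [p, p(1 + (3/4)ε²)]` and leaves a state `ψ'` with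
`‖ψ' − φv‖ ≤ ε`. -/
theorem eigenstate_filtering_qpd
    {V : Type*} [NormedAddCommGroup V] [InnerProductSpace ℂ V] [FiniteDimensional ℂ V]
    (PA PB : Module.End ℂ V)
    (hPA_idem : PA ∘ₗ PA = PA) (hPA_sym : PA.IsSymmetric)
    (hPB_idem : PB ∘ₗ PB = PB) (hPB_sym : PB.IsSymmetric)
    (U : Module.End ℂ V) (hU : U = ((2 : ℂ) • PA - 1) * ((2 : ℂ) • PB - 1))
    (φv : V) (hφv : ‖φv‖ = 1) (hUφv : U φv = φv)
    (ϕ : V) (hϕ : PB ϕ = ϕ)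
    (p : ℝ) (hp : p ∈ Set.Ioc 0 1)
    (ψ : V) (hψ : ψ = (Real.sqrt p : ℂ) • φv + (1 - PA) ϕ) (hψunit : ‖ψ‖ = 1)
    (pbar : ℝ) (hpbar : 0 < pbar) (hpbar_le : pbar ≤ p)
    (D : ℝ) (hD : 0 < D) (hDub : ‖ϕ‖ / Real.sqrt p ≤ D)
    (ε : ℝ) (hε : ε ∈ Set.Ioo 0 1) (hεD : ε / D < π)
    (L : ℕ) (hLpos : 0 < L) (hLodd : Odd L)
    (hL : (L : ℝ) ≥ (2 * D / ε) * Real.log (2 * Real.sqrt 2 / (Real.sqrt pbar * ε)))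
    (p' : ℝ) (hp' : p' = ‖(qpdCircuit U (ε / D) L (ψ, 0)).1‖ ^ 2)
    (ψ' : V) (hψ' : ψ' = (Real.sqrt p' : ℂ)⁻¹ • (qpdCircuit U (ε / D) L (ψ, 0)).1) :
    p ≤ p' ∧ p' ≤ p * (1 + (3 / 4) * ε ^ 2) ∧ ‖ψ' - φv‖ ≤ ε := by
  obtain ⟨hp0, hp1⟩ := hp
  obtain ⟨hε0, hε1⟩ := hε
  have hsp : 0 < √p := sqrt_pos.2 hp0
  have hsp2 : √p ^ 2 = p := sq_sqrt hp0.le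
  have hUiso : ∀ x y, inner ℂ (U x) (U y) = inner ℂ x y := fun x y => by
    rw [hU, Module.End.mul_apply, Module.End.mul_apply, inner_reflection hPA_idem hPA_sym,
      inner_reflection hPB_idem hPB_sym]
  -- Since `Π_B ϕ = ϕ`, the unwanted component `(1 - Π_A)ϕ` equals `(1 - U)ϕ / 2`.
  have hUϕ : U ϕ = (2 : ℂ) • PA ϕ - ϕ := by
    rw [hU]
    simp only [Module.End.mul_apply, LinearMap.sub_apply, LinearMap.smul_apply,
      Module.End.one_apply, hϕ]
    rw [two_smul ℂ ϕ, add_sub_cancel_right]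
  obtain ⟨s, f, hf, hs⟩ := exists_eigen_decomposition hUiso ϕ
  have hu : (1 - PA) ϕ = ∑ μ ∈ s, ((1 - μ) / 2) • f μ := by
    have h1 : (1 - PA) ϕ = (1 / 2 : ℂ) • (ϕ - U ϕ) := by
      rw [hUϕ, LinearMap.sub_apply, Module.End.one_apply]
      module
    rw [h1, ← hs, map_sum, ← Finset.sum_sub_distrib, Finset.smul_sum]
    refine Finset.sum_congr rfl fun μ _ => ?_
    rw [hf]
    module
  set A : ℂ → ℂ := qpdAmp (ε / D) L with hA
  set w : V := ∑ μ ∈ s, (A μ * ((1 - μ) / 2)) • f μ with hw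
  have hF : (qpdCircuit U (ε / D) L (ψ, 0)).1 = (√p : ℂ) • φv + w := by
    set F : V →ₗ[ℂ] V :=
      LinearMap.fst ℂ V V ∘ₗ qpdCircuit U (ε / D) L ∘ₗ LinearMap.inl ℂ V V with hFdef
    have hFe : ∀ (v : V) (μ : ℂ), U v = μ • v → F v = A μ • v :=
      fun v μ hv => qpdCircuit_eigenvector hv _ _
    have hφF : F φv = φv := by
      rw [hFe φv 1 (by rw [hUφv, one_smul]), hA, qpdAmp_one _ hLpos, one_smul]
    change F ψ = _
    rw [hψ, map_add, map_smul, hφF, hu, map_sum, hw]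
    congr 1
    refine Finset.sum_congr rfl fun μ _ => ?_
    rw [map_smul, hFe _ μ (hf μ), smul_smul, mul_comm]
  have hφf : ∀ μ a : ℂ, inner ℂ φv ((a * ((1 - μ) / 2)) • f μ) = 0 := by
    intro μ a
    by_cases h : 1 = μ
    · simp [← h]
    · rw [inner_smul_right, inner_eigenvectors_eq_zero hUiso
        (show U φv = (1 : ℂ) • φv by rw [hUφv, one_smul]) (hf μ) h, mul_zero]
  have hpyth : ∀ z : V, inner ℂ φv z = 0 → ‖(√p : ℂ) • φv + z‖ ^ 2 = p + ‖z‖ ^ 2 := by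
    intro z hz
    have h : inner ℂ ((√p : ℂ) • φv) z = 0 := by rw [inner_smul_left, hz, mul_zero]
    rw [sq, norm_add_sq_eq_norm_sq_add_norm_sq_of_inner_eq_zero _ _ h, norm_smul, hφv,
      Complex.norm_real, norm_of_nonneg hsp.le]
    linear_combination hsp2
  have hφw : inner ℂ φv w = 0 := by
    rw [hw, inner_sum]; exact Finset.sum_eq_zero fun μ _ => hφf μ _
  have hφu : inner ℂ φv ((1 - PA) ϕ) = 0 := by
    rw [hu, inner_sum]
    exact Finset.sum_eq_zero fun μ _ => by have := hφf μ 1; rwa [one_mul] at this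
  have hp'w : p' = p + ‖w‖ ^ 2 := by rw [hp', hF, hpyth w hφw]
  have hu1 : ‖(1 - PA) ϕ‖ ^ 2 ≤ 1 := by
    have := hpyth _ hφu
    rw [← hψ, hψunit] at this
    linarith
  have horth : ∀ c : ℂ → ℂ, ‖∑ μ ∈ s, c μ • f μ‖ ^ 2 = ∑ μ ∈ s, ‖c μ‖ ^ 2 * ‖f μ‖ ^ 2 := by
    intro c
    rw [norm_sq_sum_of_orthogonal]
    · simp only [norm_smul, mul_pow]
    · intro μ ν h
      rw [inner_smul_left, inner_smul_right, inner_eigenvectors_eq_zero hUiso (hf μ) (hf ν) h]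
      simp
  have hl0 : 0 < ε / D := by positivity
  set δ := 2 * exp (-(L * (ε / D) / 2)) with hδ
  -- Each eigencomponent is either close to phase `0`, hence small in `(1 - U)ϕ / 2`, or damped.
  have hwle : ‖w‖ ^ 2 ≤ (ε / D / 2) ^ 2 * ‖ϕ‖ ^ 2 + δ ^ 2 * ‖(1 - PA) ϕ‖ ^ 2 := by
    have hϕs : ‖ϕ‖ ^ 2 = ∑ μ ∈ s, ‖f μ‖ ^ 2 := by
      have := horth fun _ => 1
      simpa [hs] using this
    rw [hw, hu, horth, horth, hϕs, Finset.mul_sum, Finset.mul_sum, ← Finset.sum_add_distrib]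
    refine Finset.sum_le_sum fun μ _ => ?_
    by_cases h0 : f μ = 0
    · simp [h0]
    have h := qpdAmp_filter hl0 hεD hLodd (norm_eigenvalue_of_isometry hUiso (hf μ) h0)
    rw [norm_mul, mul_pow]
    have := mul_le_mul_of_nonneg_right h (sq_nonneg ‖f μ‖)
    linarith
  have hwbound : ‖w‖ ^ 2 ≤ 3 / 4 * ε ^ 2 * p := by
    have h1 : (ε / D / 2) ^ 2 * ‖ϕ‖ ^ 2 ≤ ε ^ 2 * p / 4 := by
      have h : ‖ϕ‖ ≤ D * √p := (div_le_iff₀ hsp).1 hDub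
      have h' : ‖ϕ‖ ^ 2 ≤ D ^ 2 * p := by
        rw [← hsp2, ← mul_pow]; gcongr
      calc (ε / D / 2) ^ 2 * ‖ϕ‖ ^ 2 ≤ (ε / D / 2) ^ 2 * (D ^ 2 * p) := by gcongr
        _ = ε ^ 2 * p / 4 := by field_simp; norm_num
    have h2 : δ ^ 2 ≤ p * ε ^ 2 / 2 :=
      (damping_sq_le hpbar hD hε0 hL).trans (by gcongr)
    have h3 : δ ^ 2 * ‖(1 - PA) ϕ‖ ^ 2 ≤ δ ^ 2 := mul_le_of_le_one_right (sq_nonneg _) hu1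
    linarith
  have hpp' : p ≤ p' := by rw [hp'w]; linarith [sq_nonneg ‖w‖]
  have hp'u : p' ≤ p * (1 + 3 / 4 * ε ^ 2) := by rw [hp'w]; linarith
  refine ⟨hpp', hp'u, ?_⟩
  have hp'0 : 0 < p' := hp0.trans_le hpp'
  set q := √p' with hq
  have hq0 : 0 < q := sqrt_pos.2 hp'0
  have hq2 : q ^ 2 = p' := sq_sqrt hp'0.le
  have hqp : √p ≤ q := sqrt_le_sqrt hpp'
  have e : ψ' - φv = ((q⁻¹ : ℝ) : ℂ) • (((√p - q : ℝ) : ℂ) • φv + w) := by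
    have hqc : (q : ℂ)⁻¹ * q = 1 := inv_mul_cancel₀ (by exact_mod_cast hq0.ne')
    rw [hψ', hF, smul_add, smul_add, smul_smul, smul_smul, Complex.ofReal_inv, Complex.ofReal_sub,
      mul_sub, hqc, sub_smul, one_smul]
    abel
  have hn : ‖ψ' - φv‖ ^ 2 = (q⁻¹) ^ 2 * ((√p - q) ^ 2 + ‖w‖ ^ 2) := by
    have h : inner ℂ (((√p - q : ℝ) : ℂ) • φv) w = 0 := by rw [inner_smul_left, hφw, mul_zero]
    rw [e, norm_smul, mul_pow, Complex.norm_real, Real.norm_eq_abs, sq_abs, sq ‖_ + w‖,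
      norm_add_sq_eq_norm_sq_add_norm_sq_of_inner_eq_zero _ _ h, norm_smul, hφv, mul_one,
      Complex.norm_real, Real.norm_eq_abs, abs_mul_abs_self]
    ring
  refine (sq_le_sq₀ (norm_nonneg _) hε0.le).1 ?_
  rw [hn, inv_pow, inv_mul_le_iff₀ (by positivity)]
  have hwq : ‖w‖ ^ 2 = q ^ 2 - √p ^ 2 := by rw [hq2, hsp2, hp'w]; ring
  rw [hwq]
  refine normalization_error hsp hqp ?_
  rw [← hwq, hsp2]
  exact hwbound
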